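/- Let (X_i)_{i∈ℤ} be a stationary ergodic process over a finite alphabet 𝕏 with entropy rate h. For any ε > 0 and any sequence of sample sizes n(k) ≥ 2^{k(h+ε)}, for every η > 0 we have lim_{k→∞} P(H(k, X_1^{n(k)})/k − h > η) = 0; together with the almost sure lower bound this means the plug-in estimator H(k, X_1^{n(k)})/k is a consistent estimator of h in probability. -/

import Mathlib

open MeasureTheory Filter Real

variable {𝕏 : Type*} [Fintype 𝕏] [Nonempty 𝕏] [DecidableEq 𝕏]
  [MeasurableSpace 𝕏] [MeasurableSingletonClass 𝕏]

/-- The left shift on two-sided sequences: `(shift ω) i = ω (i + 1)`. -/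
def shift (ω : ℤ → 𝕏) : ℤ → 𝕏 := fun i => ω (i + 1)

/-- The block `X_{s+1}^{s+l}` of a sequence `ω`, as a tuple in `𝕏^l`. -/
def blk (s l : ℕ) (ω : ℤ → 𝕏) : Fin l → 𝕏 := fun i => ω ((s : ℤ) + 1 + (i : ℤ))

/-- Shannon entropy (base 2) of a distribution `p` on a finite set:
`H(p) = -∑_{w : p w > 0} p w * log₂ (p w)` (`logb 2 0 = 0`, so zero-mass
points contribute nothing). -/
noncomputable def Hent {A : Type*} [Fintype A] (p : A → ℝ) : ℝ :=
  -∑ w, p w * Real.logb 2 (p w)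

/-- Empirical nonoverlapping-block distribution
`p_k(w, x_1^n) = ⌊n/k⌋⁻¹ ∑_{i=1}^{⌊n/k⌋} 1[x_{(i-1)k+1}^{ik} = w]`. -/
noncomputable def empDist (k n : ℕ) (ω : ℤ → 𝕏) : (Fin k → 𝕏) → ℝ :=
  fun w => (∑ i ∈ Finset.range (n / k), if blk (i * k) k ω = w then (1 : ℝ) else 0) / (n / k : ℕ)

/-- Plug-in estimator `H(k, x_1^n)` of the block entropy. -/
noncomputable def plugIn (k n : ℕ) (ω : ℤ → 𝕏) : ℝ := Hent (empDist k n ω)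

/-- True block distribution `p_k(w) = P(X_1^k = w)`. -/
noncomputable def pblock (μ : Measure (ℤ → 𝕏)) (k : ℕ) : (Fin k → 𝕏) → ℝ :=
  fun w => (μ {ω | blk 0 k ω = w}).toReal

/-- Block entropy `H(k) = H(p_k)`. -/
noncomputable def Hblock (μ : Measure (ℤ → 𝕏)) (k : ℕ) : ℝ := Hent (pblock μ k)

/-- Number `D(k, x_1^n)` of distinct nonoverlapping `k`-blocks in `x_1^n`. -/
noncomputable def Dcount (k n : ℕ) (ω : ℤ → 𝕏) : ℕ :=
  Set.ncard {w : Fin k → 𝕏 | ∃ i < n / k, blk (i * k) k ω = w}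

/-- Length bound `K(k, x_1^n)` of the modified `k`-block code:
`K(k,x_1^n) = 2 log₂ k + (n/k)(H(k,x_1^n) + 2) + 3 k log₂|𝕏| (D(k,x_1^n) + 1)`. -/
noncomputable def Kcode (k n : ℕ) (ω : ℤ → 𝕏) : ℝ :=
  2 * Real.logb 2 k + ((n : ℝ) / k) * (plugIn k n ω + 2)
    + 3 * k * Real.logb 2 (Fintype.card 𝕏) * (Dcount k n ω + 1)

/-- Conditional probability `P(X_1^k = w | ℐ)` given the shift-invariant
σ-algebra `ℐ`, as a function of the sample point. -/
noncomputable def condP (μ : Measure (ℤ → 𝕏)) (k : ℕ) (w : Fin k → 𝕏) : (ℤ → 𝕏) → ℝ :=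
  μ[Set.indicator {ω | blk 0 k ω = w} (fun _ => (1 : ℝ)) | MeasurableSpace.invariants shift]

/-- Conditional block entropy `H(X_1^k | ℐ) = E[-log₂ P(X_1^k = w | ℐ)|_{w = X_1^k}]`. -/
noncomputable def condH (μ : Measure (ℤ → 𝕏)) (k : ℕ) : ℝ :=
  ∫ ω, -Real.logb 2 (condP μ k (blk 0 k ω) ω) ∂μ

/-- `σ(y) = min(2^y, 1)`. -/
noncomputable def sigmaFn (y : ℝ) : ℝ := min ((2 : ℝ) ^ y) 1

/-- Negative part `x⁻ = -x · 1[x < 0]`. -/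
noncomputable def nPart (x : ℝ) : ℝ := if x < 0 then -x else 0

theorem mean_ergodic_in_measure {α : Type*} [MeasurableSpace α] {ν : Measure α}
    [IsProbabilityMeasure ν] {T : α → α} (hT : Ergodic T ν) {F : α → ℝ} (hF : MemLp F 2 ν) :
    TendstoInMeasure ν (fun N => birkhoffAverage ℝ T F N) atTop (fun _ => ∫ x, F x ∂ν) := by
  have hmp := hT.toMeasurePreserving
  let U : Lp ℝ 2 ν →L[ℝ] Lp ℝ 2 ν :=
    (Lp.compMeasurePreservingₗᵢ ℝ T hmp).toContinuousLinearMap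
  have hU : ‖U‖ ≤ 1 := LinearIsometry.norm_toContinuousLinearMap_le _
  have hUval : ∀ g, U g = Lp.compMeasurePreserving T hmp g := fun g => rfl
  have hlim := U.tendsto_birkhoffAverage_orthogonalProjection hU hF.toLp
  set y := (U.eqLocus (1 : Lp ℝ 2 ν →L[ℝ] Lp ℝ 2 ν)).orthogonalProjectionOnto hF.toLp with hy
  have hUy : U (y : Lp ℝ 2 ν) = (y : Lp ℝ 2 ν) := y.2
  obtain ⟨c, hc⟩ : ∃ c, ((y : Lp ℝ 2 ν) : α → ℝ) =ᵐ[ν] Function.const α c := by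
    refine hT.ae_eq_const_of_ae_eq_comp_ae (Lp.aestronglyMeasurable _) ?_
    have := Lp.coeFn_compMeasurePreserving (y : Lp ℝ 2 ν) hmp
    rw [← hUval, hUy] at this
    exact this.symm
  have hiter : ∀ j, (U^[j] hF.toLp : α → ℝ) =ᵐ[ν] F ∘ T^[j] := by
    intro j
    have : U^[j] = Lp.compMeasurePreserving (T^[j]) (hmp.iterate j) := by
      have h1 := Lp.compMeasurePreserving_iterate (E := ℝ) (p := 2) hmp j
      rw [← h1]; rfl
    rw [this, Lp.toLp_compMeasurePreserving hF (hmp.iterate j)]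
    exact MemLp.coeFn_toLp _
  have havg : ∀ N, (birkhoffAverage ℝ U _root_.id N hF.toLp : Lp ℝ 2 ν) =ᵐ[ν]
      birkhoffAverage ℝ T F N := by
    intro N
    have h1 : ∀ᵐ x ∂ν, ∀ j ∈ Finset.range N, (U^[j] hF.toLp : α → ℝ) x = F (T^[j] x) := by
      rw [ae_all_iff]; intro j
      filter_upwards [hiter j] with x hx _ using hx
    have h2 := Lp.coeFn_smul ((N:ℝ)⁻¹) (∑ j ∈ Finset.range N, U^[j] hF.toLp)
    have h3 := Lp.coeFn_finsetSum (Finset.range N) (fun j => U^[j] hF.toLp)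
    filter_upwards [h1, h2, h3] with x hx1 hx2 hx3
    simp only [birkhoffAverage, birkhoffSum, id]
    rw [hx2, Pi.smul_apply, hx3]
    congr 1
    rw [Finset.sum_apply]
    exact Finset.sum_congr rfl hx1
  have hcval : c = ∫ x, F x ∂ν := by
    let one : Lp ℝ 2 ν := (memLp_const (1:ℝ)).toLp
    have hone : (one : α → ℝ) =ᵐ[ν] fun _ => 1 := MemLp.coeFn_toLp _
    have h1 : one ∈ U.eqLocus (1 : Lp ℝ 2 ν →L[ℝ] Lp ℝ 2 ν) := by
      change U one = one
      rw [hUval, Lp.toLp_compMeasurePreserving (memLp_const (1:ℝ)) hmp]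
      rfl
    have h2 : inner ℝ one (hF.toLp - (y : Lp ℝ 2 ν)) = 0 := by
      have := Submodule.sub_starProjection_mem_orthogonal (K := U.eqLocus (1 : Lp ℝ 2 ν →L[ℝ] Lp ℝ 2 ν)) hF.toLp
      exact (Submodule.mem_orthogonal _ _).1 this one h1
    rw [inner_sub_right, L2.inner_def, L2.inner_def, sub_eq_zero] at h2
    have e1 : ∫ a, inner ℝ (one a) ((hF.toLp : α → ℝ) a) ∂ν = ∫ x, F x ∂ν := by
      apply integral_congr_ae
      filter_upwards [hone, hF.coeFn_toLp] with x h h'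
      simp [h, h']
    have e2 : ∫ a, inner ℝ (one a) ((y : Lp ℝ 2 ν) a) ∂ν = c := by
      have : ∫ a, inner ℝ (one a) ((y : Lp ℝ 2 ν) a) ∂ν = ∫ x, c ∂ν := by
        apply integral_congr_ae
        filter_upwards [hone, hc] with x h h'
        simp [h, h']
      simpa using this
    rw [← e1, ← e2, h2]
  have := tendstoInMeasure_of_tendsto_Lp hlim
  refine (this.congr_left havg).congr_right ?_
  rw [← hcval]; exact hc

theorem gibbs_bound {A : Type*} [Fintype A] (p q : A → ℝ) (hp : ∀ w, 0 ≤ p w)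
    (hp1 : ∑ w, p w = 1) (hq : ∀ w, 0 < q w) (C : ℝ) (hC : 0 < C) (hqC : ∑ w, q w ≤ C) :
    Hent p ≤ (∑ w, p w * (-Real.logb 2 (q w))) + Real.logb 2 C := by
  have hl2 : 0 < Real.log 2 := Real.log_pos (by norm_num)
  have key : ∀ w, p w * (Real.log (q w) - Real.log (p w) - Real.log C) ≤ q w / C - p w := by
    intro w
    rcases (hp w).eq_or_lt with h0 | h0
    · rw [← h0]; have := (hq w).le; simp; positivity
    · have h1 := Real.log_le_sub_one_of_pos (x := q w / C / p w) (by have := hq w; positivity)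
      rw [Real.log_div (by have := hq w; positivity) h0.ne', Real.log_div (hq w).ne' hC.ne'] at h1
      calc p w * (Real.log (q w) - Real.log (p w) - Real.log C)
          ≤ p w * (q w / C / p w - 1) := by
            apply mul_le_mul_of_nonneg_left _ h0.le; linarith
        _ = _ := by field_simp
  have hs := Finset.sum_le_sum (fun w (_ : w ∈ Finset.univ) => key w)
  have hR : ∑ w, (q w / C - p w) ≤ 0 := by
    rw [Finset.sum_sub_distrib, ← Finset.sum_div, hp1]
    have : (∑ w, q w) / C ≤ 1 := by rw [div_le_one hC]; exact hqC
    linarith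
  have hL : ∑ w, p w * (Real.log (q w) - Real.log (p w) - Real.log C)
      = ∑ w, p w * Real.log (q w) - ∑ w, p w * Real.log (p w) - Real.log C := by
    simp only [mul_sub, Finset.sum_sub_distrib]
    rw [← Finset.sum_mul, hp1, one_mul]
  have e : (∑ w, p w * (-Real.logb 2 (q w))) + Real.logb 2 C - Hent p
      = -(∑ w, p w * Real.log (q w) - ∑ w, p w * Real.log (p w) - Real.log C) / Real.log 2 := by
    unfold Hent Real.logb
    simp only [mul_neg, Finset.sum_neg_distrib, ← mul_div_assoc, ← Finset.sum_div]
    ring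
  have : 0 ≤ (∑ w, p w * (-Real.logb 2 (q w))) + Real.logb 2 C - Hent p := by
    rw [e]; apply div_nonneg _ hl2.le; linarith
  linarith

/-- Window of length `m + 1` starting at position `i` of a word of length `m + l`. -/
def win {m l : ℕ} (w : Fin (m + l) → 𝕏) (i : Fin l) : Fin (m + 1) → 𝕏 :=
  fun j => w ⟨i.1 + j.1, by have := i.2; have := j.2; omega⟩

theorem sum_snoc {l : ℕ} (g : (Fin (l + 1) → 𝕏) → ℝ) :
    ∑ w, g w = ∑ v : Fin l → 𝕏, ∑ a : 𝕏, g (Fin.snoc v a) := by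
  rw [← (Fin.snocEquiv (fun _ : Fin (l+1) => 𝕏)).sum_comp, Fintype.sum_prod_type_right]
  rfl

theorem sum_markov {m : ℕ} (c : (Fin (m + 1) → 𝕏) → ℝ) (hc : ∀ u, 0 ≤ c u)
    (hc1 : ∀ v : Fin m → 𝕏, ∑ a, c (Fin.snoc v a) ≤ 1) (l : ℕ) :
    ∑ w : Fin (m + l) → 𝕏, ∏ i, c (win w i) ≤ (Fintype.card 𝕏 : ℝ) ^ m := by
  induction l with
  | zero => simp
  | succ l ih =>
    refine le_trans ?_ ih
    refine le_trans (le_of_eq (sum_snoc (l := m + l) (fun w => ∏ i, c (win (l := l+1) w i)))) ?_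
    apply Finset.sum_le_sum
    intro v _
    have h1 : ∀ a, ∏ i, c (win (m := m) (l := l + 1) (Fin.snoc (α := fun _ => 𝕏) v a : Fin (m + l + 1) → 𝕏) i)
        = (∏ i, c (win v i)) * c (Fin.snoc (fun j : Fin m => v ⟨l + j, by have := j.2; omega⟩) a) := by
      intro a
      rw [Fin.prod_univ_castSucc]
      congr 1
      · apply Finset.prod_congr rfl
        intro i _
        congr 1
        funext j
        have := i.2; have := j.2
        simp only [win, Fin.snoc, Fin.val_castSucc]
        rw [dif_pos (by omega)]
        rfl
      · congr 1
        funext j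
        have := j.2
        simp only [win, Fin.snoc, Fin.val_last]
        by_cases hj : j.1 < m
        · rw [dif_pos (by omega), dif_pos hj]; rfl
        · rw [dif_neg (by omega), dif_neg hj]
    simp only [h1]
    rw [← Finset.mul_sum]
    exact mul_le_of_le_one_right (Finset.prod_nonneg fun _ _ => hc _) (hc1 _)

theorem shift_iter (j : ℕ) (ω : ℤ → 𝕏) (i : ℤ) : (shift^[j] ω) i = ω (i + j) := by
  induction j generalizing ω with
  | zero => simp
  | succ j ih =>
    rw [Function.iterate_succ_apply, ih]
    simp only [shift]
    congr 1; push_cast; ring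

theorem blk_shift (j l : ℕ) (ω : ℤ → 𝕏) : blk 0 l (shift^[j] ω) = blk j l ω := by
  funext i
  simp only [blk, shift_iter]
  congr 1; push_cast; ring

theorem measurable_blk (s l : ℕ) : Measurable (blk (𝕏 := 𝕏) s l) :=
  measurable_pi_lambda _ fun _ => measurable_pi_apply _

theorem measSet_blk (l : ℕ) (w : Fin l → 𝕏) : MeasurableSet {ω : ℤ → 𝕏 | blk 0 l ω = w} :=
  measurable_blk 0 l (measurableSet_singleton w)

theorem pblock_nonneg (μ : Measure (ℤ → 𝕏)) (k : ℕ) (w) : 0 ≤ pblock μ k w :=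
  ENNReal.toReal_nonneg

theorem pblock_marg (μ : Measure (ℤ → 𝕏)) [IsProbabilityMeasure μ] (m : ℕ) (v : Fin m → 𝕏) :
    ∑ a, pblock μ (m + 1) (Fin.snoc v a) = pblock μ m v := by
  have hset : {ω : ℤ → 𝕏 | blk 0 m ω = v}
      = ⋃ a ∈ (Finset.univ : Finset 𝕏), {ω | blk 0 (m+1) ω = Fin.snoc (α := fun _ => 𝕏) v a} := by
    ext ω
    simp only [Set.mem_ofPred_eq, Set.mem_iUnion, Finset.mem_univ, exists_prop, true_and]
    have hb : Fin.init (α := fun _ => 𝕏) (blk 0 (m+1) ω) = blk 0 m ω := rfl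
    constructor
    · intro h
      refine ⟨blk 0 (m+1) ω (Fin.last m), ?_⟩
      rw [← h, ← hb, Fin.snoc_init_self]
    · rintro ⟨a, ha⟩
      rw [← hb, ha, Fin.init_snoc]
  have := measureReal_biUnion_finset (μ := μ) (s := (Finset.univ : Finset 𝕏))
    (f := fun a => {ω | blk 0 (m+1) ω = Fin.snoc (α := fun _ => 𝕏) v a}) (by
      intro a _ b _ hab
      refine Set.disjoint_left.2 fun ω (h1 : _ = _) (h2 : _ = _) => hab ?_
      rw [h1] at h2
      have := congrFun h2 (Fin.last m)
      simpa using this) (fun a _ => measSet_blk _ _)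
  rw [← hset] at this
  exact this.symm

theorem integral_blk (μ : Measure (ℤ → 𝕏)) [IsProbabilityMeasure μ] (l : ℕ)
    (f : (Fin l → 𝕏) → ℝ) : ∫ ω, f (blk 0 l ω) ∂μ = ∑ w, pblock μ l w * f w := by
  have hm : AEMeasurable (blk (𝕏 := 𝕏) 0 l) μ := (measurable_blk 0 l).aemeasurable
  have : IsProbabilityMeasure (μ.map (blk (𝕏 := 𝕏) 0 l)) := Measure.isProbabilityMeasure_map hm
  have hf : Measurable f := measurable_of_finite f
  rw [← integral_map hm hf.aestronglyMeasurable, integral_fintype (Integrable.of_finite)]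
  apply Finset.sum_congr rfl
  intro w _
  rw [smul_eq_mul, Measure.real, Measure.map_apply_of_aemeasurable hm (measurableSet_singleton w)]
  rfl

theorem sum_pblock (μ : Measure (ℤ → 𝕏)) [IsProbabilityMeasure μ] (l : ℕ) :
    ∑ w, pblock μ l w = 1 := by
  have := integral_blk μ l (fun _ => 1)
  simpa using this.symm

theorem Hblock_zero (μ : Measure (ℤ → 𝕏)) [IsProbabilityMeasure μ] : Hblock μ 0 = 0 := by
  have h := sum_pblock μ 0
  simp only [Fintype.sum_unique] at h
  simp [Hblock, Hent, h]

theorem Hblock_nonneg (μ : Measure (ℤ → 𝕏)) [IsProbabilityMeasure μ] (k : ℕ) :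
    0 ≤ Hblock μ k := by
  unfold Hblock Hent
  rw [← Finset.sum_neg_distrib]
  apply Finset.sum_nonneg
  intro w _
  have h0 := pblock_nonneg μ k w
  have h1 : pblock μ k w ≤ 1 := by
    rw [← sum_pblock μ k]
    exact Finset.single_le_sum (fun i _ => pblock_nonneg μ k i) (Finset.mem_univ w)
  have := Real.logb_nonpos (b := 2) (by norm_num) h0 h1
  nlinarith

theorem emp_nonneg (k n : ℕ) (ω : ℤ → 𝕏) (w) : 0 ≤ empDist k n ω w := by
  unfold empDist
  apply div_nonneg _ (Nat.cast_nonneg _)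
  exact Finset.sum_nonneg fun i _ => by split_ifs <;> norm_num

theorem emp_sum (k n : ℕ) (ω : ℤ → 𝕏) (g : (Fin k → 𝕏) → ℝ) :
    ∑ w, empDist k n ω w * g w
      = (∑ b ∈ Finset.range (n / k), g (blk (b * k) k ω)) / (n / k : ℕ) := by
  simp only [empDist, div_mul_eq_mul_div, Finset.sum_mul, ← Finset.sum_div]
  rw [Finset.sum_comm]
  congr 1
  apply Finset.sum_congr rfl
  intro b _
  simp

/-- Conditional block entropy increment as an average of conditional log-probabilities. -/
theorem Hblock_diff (μ : Measure (ℤ → 𝕏)) [IsProbabilityMeasure μ] (m : ℕ) :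
    Hblock μ (m + 1) - Hblock μ m = ∑ u : Fin (m + 1) → 𝕏, pblock μ (m + 1) u *
      (-Real.logb 2 (pblock μ (m + 1) u / pblock μ m (Fin.init (α := fun _ => 𝕏) u))) := by
  have h1 : Hblock μ m = -∑ u : Fin (m + 1) → 𝕏,
      pblock μ (m + 1) u * Real.logb 2 (pblock μ m (Fin.init (α := fun _ => 𝕏) u)) := by
    rw [sum_snoc]
    unfold Hblock Hent
    congr 1
    apply Finset.sum_congr rfl
    intro v _
    simp only [Fin.init_snoc]
    rw [← Finset.sum_mul, pblock_marg]
  rw [h1]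
  unfold Hblock Hent
  rw [← Finset.sum_neg_distrib, ← Finset.sum_neg_distrib, ← Finset.sum_sub_distrib]
  apply Finset.sum_congr rfl
  intro u _
  rcases (pblock_nonneg μ (m+1) u).eq_or_lt with h0 | h0
  · simp [← h0]
  · have h2 : pblock μ (m+1) u ≤ pblock μ m (Fin.init (α := fun _ => 𝕏) u) := by
      rw [← pblock_marg μ m]
      conv_lhs => rw [← Fin.snoc_init_self (α := fun _ => 𝕏) u]
      exact Finset.single_le_sum
        (f := fun a => pblock μ (m+1) (Fin.snoc (Fin.init (α := fun _ => 𝕏) u) a))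
        (fun i _ => pblock_nonneg μ _ _) (Finset.mem_univ _)
    rw [Real.logb_div h0.ne' (by linarith)]
    ring

theorem exists_small_incr (μ : Measure (ℤ → 𝕏)) [IsProbabilityMeasure μ] (h : ℝ)
    (hrate : Tendsto (fun k => Hblock μ k / k) atTop (nhds h)) (τ : ℝ) (hτ : 0 < τ) :
    ∃ m, Hblock μ (m + 1) - Hblock μ m < h + τ := by
  by_contra! hcon
  have h1 : ∀ k : ℕ, k * (h + τ) ≤ Hblock μ k := by
    intro k
    induction k with
    | zero => simp [Hblock_zero]
    | succ k ih => have := hcon k; push_cast; linarith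
  have h2 : h + τ ≤ h := by
    refine ge_of_tendsto hrate ?_
    filter_upwards [eventually_gt_atTop 0] with k hk
    have : (0:ℝ) < k := by exact_mod_cast hk
    rw [le_div_iff₀ this]; linarith [h1 k]
  linarith

/-- Smoothed conditional probability. -/
noncomputable def smc (μ : Measure (ℤ → 𝕏)) (m : ℕ) (τ : ℝ) (u : Fin (m + 1) → 𝕏) : ℝ :=
  (2 : ℝ) ^ (-τ) * (pblock μ (m + 1) u / pblock μ m (Fin.init (α := fun _ => 𝕏) u))
    + (1 - (2 : ℝ) ^ (-τ)) / Fintype.card 𝕏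

theorem two_rpow_neg_lt {τ : ℝ} (hτ : 0 < τ) : (2 : ℝ) ^ (-τ) < 1 :=
  Real.rpow_lt_one_of_one_lt_of_neg (by norm_num) (by linarith)

theorem smc_pos (μ : Measure (ℤ → 𝕏)) (m : ℕ) {τ : ℝ} (hτ : 0 < τ) (u : Fin (m + 1) → 𝕏) :
    0 < smc μ m τ u := by
  have h1 := two_rpow_neg_lt hτ
  have h2 := pblock_nonneg μ (m+1) u
  have h3 := pblock_nonneg μ m (Fin.init (α := fun _ => 𝕏) u)
  have h4 : (0:ℝ) < Fintype.card 𝕏 := by exact_mod_cast Fintype.card_pos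
  have h5 : 0 < 1 - (2 : ℝ) ^ (-τ) := by linarith
  unfold smc
  positivity

theorem smc_sum (μ : Measure (ℤ → 𝕏)) [IsProbabilityMeasure μ] (m : ℕ) {τ : ℝ} (hτ : 0 < τ)
    (v : Fin m → 𝕏) : ∑ a, smc μ m τ (Fin.snoc v a) ≤ 1 := by
  have h1 := two_rpow_neg_lt hτ
  have h4 : (0:ℝ) < Fintype.card 𝕏 := by exact_mod_cast Fintype.card_pos
  have h0 : (0:ℝ) < (2 : ℝ) ^ (-τ) := by positivity
  simp only [smc, Fin.init_snoc, Finset.sum_add_distrib, ← Finset.mul_sum, ← Finset.sum_div,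
    pblock_marg, Finset.sum_const, Finset.card_univ, nsmul_eq_mul]
  rw [mul_div_cancel_left₀ _ h4.ne']
  have := div_self_le_one (pblock μ m v)
  nlinarith

theorem smc_le_one (μ : Measure (ℤ → 𝕏)) [IsProbabilityMeasure μ] (m : ℕ) {τ : ℝ} (hτ : 0 < τ)
    (u : Fin (m + 1) → 𝕏) : smc μ m τ u ≤ 1 := by
  refine le_trans ?_ (smc_sum μ m hτ (Fin.init (α := fun _ => 𝕏) u))
  conv_lhs => rw [← Fin.snoc_init_self (α := fun _ => 𝕏) u]
  exact Finset.single_le_sum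
    (f := fun a => smc μ m τ (Fin.snoc (Fin.init (α := fun _ => 𝕏) u) a))
    (fun i _ => (smc_pos μ m hτ _).le) (Finset.mem_univ _)

theorem smc_mean (μ : Measure (ℤ → 𝕏)) [IsProbabilityMeasure μ] (m : ℕ) {τ : ℝ} (hτ : 0 < τ) :
    ∑ u, pblock μ (m + 1) u * (-Real.logb 2 (smc μ m τ u))
      ≤ Hblock μ (m + 1) - Hblock μ m + τ := by
  have e : τ = ∑ u, pblock μ (m + 1) u * τ := by rw [← Finset.sum_mul, sum_pblock, one_mul]
  rw [Hblock_diff]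
  conv_rhs => rw [e]
  rw [← Finset.sum_add_distrib]
  apply Finset.sum_le_sum
  intro u _
  rcases (pblock_nonneg μ (m+1) u).eq_or_lt with h0 | h0
  · simp [← h0]
  rw [← mul_add]
  apply mul_le_mul_of_nonneg_left _ h0.le
  rcases (pblock_nonneg μ m (Fin.init (α := fun _ => 𝕏) u)).eq_or_lt with h3 | h3
  · exfalso
    have h2 : pblock μ (m+1) u ≤ pblock μ m (Fin.init (α := fun _ => 𝕏) u) := by
      rw [← pblock_marg μ m]
      conv_lhs => rw [← Fin.snoc_init_self (α := fun _ => 𝕏) u]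
      exact Finset.single_le_sum
        (f := fun a => pblock μ (m+1) (Fin.snoc (Fin.init (α := fun _ => 𝕏) u) a))
        (fun i _ => pblock_nonneg μ _ _) (Finset.mem_univ _)
    linarith
  have h5 : (0:ℝ) < (2 : ℝ) ^ (-τ) := by positivity
  have h6 : 0 < pblock μ (m + 1) u / pblock μ m (Fin.init (α := fun _ => 𝕏) u) := by positivity
  have h7 : (2 : ℝ) ^ (-τ) * (pblock μ (m + 1) u / pblock μ m (Fin.init (α := fun _ => 𝕏) u))
      ≤ smc μ m τ u := by
    have h1 := two_rpow_neg_lt hτ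
    have : 0 ≤ (1 - (2 : ℝ) ^ (-τ)) / Fintype.card 𝕏 :=
      div_nonneg (by linarith) (Nat.cast_nonneg _)
    unfold smc; linarith
  have h8 := Real.logb_le_logb_of_le (b := 2) (by norm_num) (by positivity) h7
  rw [Real.logb_mul h5.ne' h6.ne', Real.logb_rpow (by norm_num) (by norm_num)] at h8
  linarith

theorem sum_blocks_le (g : ℕ → ℝ) (hg : ∀ j, 0 ≤ g j) (L k : ℕ) (hL : L ≤ k) (N : ℕ) :
    ∑ b ∈ Finset.range N, ∑ i ∈ Finset.range L, g (b * k + i) ≤ ∑ j ∈ Finset.range (N * k), g j := by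
  induction N with
  | zero => simp
  | succ N ih =>
    rw [Finset.sum_range_succ, Nat.succ_mul, Finset.sum_range_add]
    refine add_le_add ih ?_
    exact Finset.sum_le_sum_of_subset_of_nonneg (Finset.range_mono hL) fun _ _ _ => hg _

/-- Pathwise bound of the plug-in entropy by a Birkhoff sum. -/
theorem plugIn_le (m l n : ℕ) (c : (Fin (m + 1) → 𝕏) → ℝ)
    (hc : ∀ u : Fin (m + 1) → 𝕏, 0 < c u) (hc2 : ∀ u : Fin (m + 1) → 𝕏, c u ≤ 1)
    (hc1 : ∀ v : Fin m → 𝕏, ∑ a, c (Fin.snoc v a : Fin (m + 1) → 𝕏) ≤ 1)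
    (hN : 0 < n / (m + l)) (ω : ℤ → 𝕏) :
    plugIn (m + l) n ω ≤ (∑ j ∈ Finset.range (n / (m + l) * (m + l)),
        -Real.logb 2 (c (blk 0 (m + 1) (shift^[j] ω)))) / (n / (m + l) : ℕ)
      + Real.logb 2 ((Fintype.card 𝕏 : ℝ) ^ m) := by
  have hcard : (0:ℝ) < Fintype.card 𝕏 := by exact_mod_cast Fintype.card_pos
  have hNr : (0:ℝ) < (n / (m + l) : ℕ) := by exact_mod_cast hN
  have hp1 : ∑ w, empDist (m + l) n ω w = 1 := by
    have := emp_sum (m + l) n ω (fun _ => 1)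
    simp only [mul_one, Finset.sum_const, Finset.card_range, nsmul_eq_mul] at this
    rw [this, div_self hNr.ne']
  have hg := gibbs_bound (empDist (m + l) n ω) (fun w => ∏ i, c (win w i))
    (emp_nonneg _ _ _) hp1 (fun w => Finset.prod_pos fun i _ => hc _)
    ((Fintype.card 𝕏 : ℝ) ^ m) (by positivity) (sum_markov c (fun u => (hc u).le) hc1 l)
  refine le_trans hg ?_
  gcongr
  rw [emp_sum]
  apply div_le_div_of_nonneg_right _ hNr.le
  refine le_trans (le_of_eq ?_) (sum_blocks_le
    (fun j => -Real.logb 2 (c (blk 0 (m + 1) (shift^[j] ω)))) (fun j => ?_) l (m + l) (by omega) _)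
  · apply Finset.sum_congr rfl
    intro b _
    rw [Real.logb_prod _ _ (fun i _ => (hc _).ne'), ← Finset.sum_neg_distrib,
      ← Fin.sum_univ_eq_sum_range
        (fun i => -Real.logb 2 (c (blk 0 (m + 1) (shift^[b * (m + l) + i] ω))))]
    apply Finset.sum_congr rfl
    intro i _
    rw [blk_shift]
    congr 3
    funext j
    simp only [win, blk]
    congr 1; push_cast; ring
  · have := Real.logb_nonpos (b := 2) (by norm_num) (hc (blk 0 (m + 1) (shift^[j] ω))).le (hc2 _)
    linarith

/-- Theorem 1, consistency in probability: for a stationary ergodic process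
with entropy rate `h`, any `ε > 0` and sample sizes `n(k) ≥ 2^{k(h+ε)}`, for
every `η > 0` we have `lim_{k→∞} P(H(k, X_1^{n(k)})/k − h > η) = 0`. -/
theorem plugIn_rate_consistent_in_probability
    {μ : Measure (ℤ → 𝕏)} [IsProbabilityMeasure μ]
    (herg : Ergodic shift μ) (h : ℝ)
    (hrate : Tendsto (fun k => Hblock μ k / k) atTop (nhds h))
    (ε : ℝ) (hε : 0 < ε) (n : ℕ → ℕ)
    (hn : ∀ k : ℕ, (2 : ℝ) ^ ((k : ℝ) * (h + ε)) ≤ (n k : ℝ)) :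
    ∀ η > (0 : ℝ),
      Tendsto (fun k => (μ {ω | plugIn k (n k) ω / k - h > η}).toReal)
        atTop (nhds 0) := by
  intro η hη
  set τ := η / 4 with hτd
  have hτ : 0 < τ := by positivity
  have hh : 0 ≤ h := ge_of_tendsto' hrate fun k => div_nonneg (Hblock_nonneg μ k) (Nat.cast_nonneg k)
  obtain ⟨m, hm⟩ := exists_small_incr μ h hrate τ hτ
  let F : (ℤ → 𝕏) → ℝ := fun ω => -Real.logb 2 (smc μ m τ (blk 0 (m + 1) ω))
  have hEF : ∫ ω, F ω ∂μ ≤ h + 2 * τ := by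
    have h1 := integral_blk μ (m + 1) (fun u => -Real.logb 2 (smc μ m τ u))
    have h2 := smc_mean μ m hτ
    change ∫ ω, -Real.logb 2 (smc μ m τ (blk 0 (m + 1) ω)) ∂μ ≤ _
    linarith
  have hFm : MemLp F 2 μ := by
    have hmeas : Measurable (fun u : Fin (m + 1) → 𝕏 => -Real.logb 2 (smc μ m τ u)) :=
      measurable_of_finite _
    obtain ⟨M, hM⟩ := (Set.finite_range
      (fun u : Fin (m + 1) → 𝕏 => ‖-Real.logb 2 (smc μ m τ u)‖)).bddAbove
    exact MemLp.of_bound (hmeas.comp (measurable_blk 0 (m + 1))).aestronglyMeasurable M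
      (ae_of_all _ fun ω => hM ⟨_, rfl⟩)
  have hconv := mean_ergodic_in_measure herg hFm
  have hconv2 := (tendstoInMeasure_iff_measureReal_dist.1 hconv) τ hτ
  set C := Real.logb 2 ((Fintype.card 𝕏 : ℝ) ^ m) with hC
  have hCk : Tendsto (fun k : ℕ => C / k) atTop (nhds 0) := tendsto_const_div_atTop_nhds_zero_nat C
  rw [Metric.tendsto_atTop]
  intro δ hδ
  obtain ⟨M, hM⟩ := Metric.tendsto_atTop.1 hconv2 δ hδ
  obtain ⟨K, hK⟩ := eventually_atTop.1 (hCk.eventually (gt_mem_nhds hτ))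
  refine ⟨max (max M K) (m + 1), fun k hk => ?_⟩
  have hkM : M ≤ k := by omega
  have hkK : K ≤ k := by omega
  obtain ⟨l, rfl⟩ : ∃ l, k = m + l := ⟨k - m, by omega⟩
  have hk0 : (0 : ℝ) < (m + l : ℕ) := by exact_mod_cast (by omega : 0 < m + l)
  rw [Real.dist_eq, sub_zero, abs_of_nonneg ENNReal.toReal_nonneg]
  rcases Nat.eq_zero_or_pos (n (m + l) / (m + l)) with hN | hN
  · have : {ω : ℤ → 𝕏 | plugIn (m + l) (n (m + l)) ω / (m + l : ℕ) - h > η} = ∅ := by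
      ext ω
      have : plugIn (m + l) (n (m + l)) ω = 0 := by
        simp [plugIn, Hent, empDist, hN]
      simp only [Set.mem_ofPred_eq, this, zero_div, Set.mem_empty_iff_false, iff_false]
      linarith
    rw [this]; simpa using hδ
  · have hNr : (0 : ℝ) < (n (m + l) / (m + l) : ℕ) := by exact_mod_cast hN
    have h1 := hM (n (m + l) / (m + l) * (m + l)) (le_trans hkM (Nat.le_mul_of_pos_left _ hN))
    rw [Real.dist_eq, sub_zero, abs_of_nonneg measureReal_nonneg] at h1
    refine lt_of_le_of_lt (measureReal_mono ?_) h1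
    intro ω hω
    simp only [Set.mem_ofPred_eq] at hω ⊢
    have h2 := plugIn_le m l (n (m + l)) (smc μ m τ) (smc_pos μ m hτ) (smc_le_one μ m hτ)
      (smc_sum μ m hτ) hN ω
    rw [← hC] at h2
    have h3 : plugIn (m + l) (n (m + l)) ω / (m + l : ℕ) ≤
        birkhoffAverage ℝ shift F (n (m + l) / (m + l) * (m + l)) ω + C / (m + l : ℕ) := by
      refine le_trans (div_le_div_of_nonneg_right h2 hk0.le) (le_of_eq ?_)
      rw [add_div, div_div]
      simp only [birkhoffAverage, birkhoffSum, smul_eq_mul, F]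
      rw [Nat.cast_mul, div_eq_inv_mul]
    have h4 := hK _ hkK
    rw [Real.dist_eq]
    refine le_trans ?_ (le_abs_self _)
    linarith
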